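/- arXiv:2307.10857 — 3 statements merged into one kernel-verified Lean document; each statement's English description precedes it below -/
import Mathlib

section
/- Let V be a Banach space, a < b real numbers, and let F : (a,b) → V be continuous. Suppose there exists a strongly measurable, Bochner-integrable map g : (a,b) → V such that ∫_{(a,b)} φ'(t) · F(t) dt = −∫_{(a,b)} φ(t) · g(t) dt (Bochner integrals with respect to Lebesgue measure) for every smooth compactly supported φ : (a,b) → ℝ. Then F is differentiable at almost every t ∈ (a,b), and F'(t) = g(t) for almost every t ∈ (a,b). -/
open MeasureTheory Set

/-!
Let `G` be a primitive of `g`. It is absolutely continuous with `G' = g` almost everywhere, so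
integration by parts shows that `g` is also a weak derivative of `G`, and `F - G` has weak
derivative `0`. By the du Bois-Reymond lemma `F - G` is almost everywhere equal to a constant, and
by continuity it is that constant everywhere. The Lebesgue differentiation theorem for `G`
concludes.

For the du Bois-Reymond lemma, fix a test function `η` with integral `1`. Every test function `φ`
is `(∫ φ) η` plus a test function of mean zero, and the latter is the derivative of a test function.
A function `F` with weak derivative `0` therefore satisfies `∫ φ F = (∫ φ) (∫ η F)`, which says that
`F - ∫ η F` is orthogonal to all test functions.
-/

open Filter Topology Function
open scoped ContDiff

section

variable {V : Type*} [NormedAddCommGroup V] [NormedSpace ℝ V]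

section AbsolutelyContinuous

lemma absolutelyContinuousOnInterval_of_dist_le {X Y : Type*} [PseudoMetricSpace X]
    [PseudoMetricSpace Y] {f : ℝ → X} {h : ℝ → Y} {a b : ℝ}
    (hh : AbsolutelyContinuousOnInterval h a b)
    (hfh : ∀ x ∈ uIcc a b, ∀ y ∈ uIcc a b, dist (f x) (f y) ≤ dist (h x) (h y)) :
    AbsolutelyContinuousOnInterval f a b := by
  rw [absolutelyContinuousOnInterval_iff] at hh ⊢
  intro ε hε
  obtain ⟨δ, hδ, hsum⟩ := hh ε hε
  refine ⟨δ, hδ, fun E hE hlen => lt_of_le_of_lt (Finset.sum_le_sum fun i hi => ?_)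
    (hsum E hE hlen)⟩
  exact hfh _ (hE.1 i hi).1 _ (hE.1 i hi).2

variable {f f' : ℝ → V} {a b c : ℝ}

lemma absolutelyContinuousOnInterval_integral (hf : IntervalIntegrable f volume a b)
    (hc : c ∈ uIcc a b) : AbsolutelyContinuousOnInterval (fun x => ∫ s in c..x, f s) a b := by
  have hint : ∀ x ∈ uIcc a b, IntervalIntegrable f volume c x := fun x hx =>
    hf.mono_set (uIcc_subset_uIcc hc hx)
  refine absolutelyContinuousOnInterval_of_dist_le
    (hf.norm.absolutelyContinuousOnInterval_intervalIntegral hc) fun x hx y hy => ?_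
  rw [dist_eq_norm, Real.dist_eq,
    intervalIntegral.integral_interval_sub_left (hint x hx) (hint y hy),
    intervalIntegral.integral_interval_sub_left (hint x hx).norm (hint y hy).norm]
  exact intervalIntegral.norm_integral_le_abs_integral_norm

variable [CompleteSpace V]

theorem integral_eq_sub_of_ae_hasDerivAt (hf : AbsolutelyContinuousOnInterval f a b)
    (hf' : IntervalIntegrable f' volume a b)
    (hderiv : ∀ᵐ x, x ∈ uIcc a b → HasDerivAt f (f' x) x) :
    ∫ x in a..b, f' x = f b - f a := by
  have hconst : ∀ᵐ x, x ∈ uIcc a b → HasDerivAt (fun x => f x - ∫ s in a..x, f' s) 0 x := by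
    filter_upwards [hderiv, hf'.ae_hasDerivAt_integral] with x hfx hIx hx
    simpa only [sub_self] using (hfx hx).fun_sub (hIx hx a left_mem_uIcc)
  obtain ⟨C, hC⟩ := AbsolutelyContinuousOnInterval.const_of_ae_hasDerivAt_zero
    (hf.fun_sub (absolutelyContinuousOnInterval_integral hf' left_mem_uIcc)) hconst
  have hab := (hC b right_mem_uIcc).trans (hC a left_mem_uIcc).symm
  rw [intervalIntegral.integral_same, sub_zero] at hab
  rw [← hab, sub_sub_cancel]

end AbsolutelyContinuous

section TestFunctions

lemma integrable_smul_of_tsupport_subset {X : Type*} [TopologicalSpace X] [MeasurableSpace X]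
    [OpensMeasurableSpace X] [T2Space X] {μ : Measure X} {U : Set X} {φ : X → ℝ} {f : X → V}
    (hf : LocallyIntegrableOn f U μ) (hφ : Continuous φ) (hφc : HasCompactSupport φ)
    (hφU : tsupport φ ⊆ U) : Integrable (fun x => φ x • f x) μ := by
  have hon : IntegrableOn (fun x => φ x • f x) (tsupport φ) μ :=
    (hf.integrableOn_compact_subset hφU hφc).continuousOn_smul hφ.continuousOn hφc
  refine (integrableOn_iff_integrable_of_support_subset ?_).1 hon
  exact (support_smul_subset_left φ f).trans (subset_tsupport φ)

lemma exists_contDiff_integral_eq_one {E : Type*} [NormedAddCommGroup E] [NormedSpace ℝ E]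
    [FiniteDimensional ℝ E] [MeasurableSpace E] [BorelSpace E] (μ : Measure E)
    [IsLocallyFiniteMeasure μ] [μ.IsOpenPosMeasure] {U : Set E} (hU : IsOpen U)
    (hne : U.Nonempty) :
    ∃ η : E → ℝ, ContDiff ℝ ∞ η ∧ HasCompactSupport η ∧ tsupport η ⊆ U ∧ ∫ x, η x ∂μ = 1 := by
  obtain ⟨x, hx⟩ := hne
  obtain ⟨r, hr, hrU⟩ := Metric.nhds_basis_closedBall.mem_iff.1 (hU.mem_nhds hx)
  let η : ContDiffBump x := ⟨r / 2, r, half_pos hr, half_lt_self hr⟩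
  exact ⟨η.normed μ, η.contDiff_normed, η.hasCompactSupport_normed,
    η.tsupport_normed_eq.trans_subset hrU, η.integral_normed⟩

lemma exists_deriv_eq_of_integral_eq_zero {U : Set ℝ} (hU : U.OrdConnected) {φ : ℝ → ℝ}
    (hφ : ContDiff ℝ ∞ φ) (hφc : HasCompactSupport φ) (hφU : tsupport φ ⊆ U)
    (hφ0 : ∫ t, φ t = 0) :
    ∃ ψ : ℝ → ℝ, ContDiff ℝ ∞ ψ ∧ HasCompactSupport ψ ∧ tsupport ψ ⊆ U ∧ deriv ψ = φ := by
  rcases (tsupport φ).eq_empty_or_nonempty with hempty | hne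
  · exact ⟨0, contDiff_const, .zero, by simp [tsupport], by
      simp [tsupport_eq_empty_iff.1 hempty]⟩
  set m := sInf (tsupport φ)
  set M := sSup (tsupport φ)
  have hmM : tsupport φ ⊆ Icc m M := hφc.isBounded.subset_Icc_sInf_sSup
  have hderiv : ∀ t, HasDerivAt (fun t => ∫ s in (m - 1)..t, φ s) (φ t) t := fun t =>
    (hφ.continuous.integral_hasStrictDerivAt (m - 1) t).hasDerivAt
  have hψ0 : ∀ t ∉ Icc m M, ∫ s in (m - 1)..t, φ s = 0 := by
    intro t ht
    rcases lt_or_ge t m with htm | hmt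
    · refine intervalIntegral.integral_zero_ae (Eventually.of_forall fun s hs => ?_)
      refine image_eq_zero_of_notMem_tsupport fun hsφ => ?_
      exact (hs.2.trans_lt (max_lt (sub_one_lt m) htm)).not_ge (hmM hsφ).1
    · rw [intervalIntegral.integral_eq_integral_of_support_subset, hφ0]
      intro s hs
      have hsmM := hmM (subset_tsupport φ hs)
      have hMt : M < t := not_le.1 fun htM => ht ⟨hmt, htM⟩
      exact ⟨(sub_one_lt m).trans_le hsmM.1, hsmM.2.trans hMt.le⟩
  refine ⟨fun t => ∫ s in (m - 1)..t, φ s, ?_, .intro isCompact_Icc hψ0, ?_,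
    funext fun t => (hderiv t).deriv⟩
  · refine contDiff_infty_iff_deriv.2 ⟨fun t => (hderiv t).differentiableAt, ?_⟩
    rwa [funext fun t => (hderiv t).deriv]
  · refine (closure_minimal (fun t ht => ?_) isClosed_Icc).trans
      (hU.out (hφU (hφc.sInf_mem hne)) (hφU (hφc.sSup_mem hne)))
    exact by_contra fun htm => ht (hψ0 t htm)

end TestFunctions

/-- `g` is a Bochner weak derivative of `F` on `U`: the identity `∫ φ' F = -∫ φ g` holds for all
smooth real test functions `φ` with compact support in `U`. The integrals are taken over `ℝ`, as
both integrands vanish off `U`. -/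
def HasWeakDerivOn (F g : ℝ → V) (U : Set ℝ) : Prop :=
  ∀ φ : ℝ → ℝ, ContDiff ℝ ∞ φ → HasCompactSupport φ → tsupport φ ⊆ U →
    ∫ t, deriv φ t • F t = -∫ t, φ t • g t

lemma hasWeakDerivOn_iff_setIntegral {F g : ℝ → V} {U : Set ℝ} :
    HasWeakDerivOn F g U ↔
      ∀ φ : ℝ → ℝ, ContDiff ℝ ∞ φ → HasCompactSupport φ → tsupport φ ⊆ U →
        ∫ t in U, deriv φ t • F t = -∫ t in U, φ t • g t := by
  refine forall₄_congr fun φ _ _ hφU => ?_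
  rw [setIntegral_eq_integral_of_forall_compl_eq_zero fun t ht => ?_,
    setIntegral_eq_integral_of_forall_compl_eq_zero fun t ht => ?_]
  · rw [image_eq_zero_of_notMem_tsupport fun h => ht (hφU h), zero_smul]
  · rw [notMem_support.1 fun h => ht (hφU (support_deriv_subset h)), zero_smul]

theorem hasWeakDerivOn_of_absolutelyContinuousOnInterval [CompleteSpace V] {F g : ℝ → V} {a b : ℝ}
    (hF : AbsolutelyContinuousOnInterval F a b) (hg : IntervalIntegrable g volume a b)
    (hderiv : ∀ᵐ t, t ∈ uIcc a b → HasDerivAt F (g t) t) : HasWeakDerivOn F g (Ioo a b) := by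
  intro φ hφ _ hφab
  have hφ1 : ContDiff ℝ 1 φ := hφ.of_le (by simp)
  have hφF' : IntervalIntegrable (fun t => deriv φ t • F t) volume a b :=
    ((hφ1.continuous_deriv le_rfl).continuousOn.smul hF.continuousOn).intervalIntegrable
  have hφg : IntervalIntegrable (fun t => φ t • g t) volume a b :=
    hg.continuousOn_smul hφ.continuous.continuousOn
  have hprod : ∀ᵐ t, t ∈ uIcc a b →
      HasDerivAt (fun t => φ t • F t) (φ t • g t + deriv φ t • F t) t := by
    filter_upwards [hderiv] with t ht htab
    exact (hφ1.differentiable one_ne_zero t).hasDerivAt.fun_smul (ht htab)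
  have hibp := integral_eq_sub_of_ae_hasDerivAt
    (hφ1.contDiffOn.absolutelyContinuousOnInterval.fun_smul hF) (hφg.add hφF') hprod
  have hφa : φ a = 0 := image_eq_zero_of_notMem_tsupport fun h => (hφab h).1.false
  have hφb : φ b = 0 := image_eq_zero_of_notMem_tsupport fun h => (hφab h).2.false
  have hIoc : tsupport φ ⊆ Ioc a b := hφab.trans Ioo_subset_Ioc_self
  have hφg_line : ∫ t in a..b, φ t • g t = ∫ t, φ t • g t :=
    intervalIntegral.integral_eq_integral_of_support_subset
      ((support_smul_subset_left φ g).trans ((subset_tsupport φ).trans hIoc))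
  have hφF'_line : ∫ t in a..b, deriv φ t • F t = ∫ t, deriv φ t • F t :=
    intervalIntegral.integral_eq_integral_of_support_subset
      ((support_smul_subset_left (deriv φ) F).trans (support_deriv_subset.trans hIoc))
  rw [intervalIntegral.integral_add hφg hφF', hφa, hφb, zero_smul, zero_smul, sub_zero,
    hφg_line, hφF'_line] at hibp
  exact eq_neg_of_add_eq_zero_right hibp

lemma hasWeakDerivOn_integral [CompleteSpace V] {g : ℝ → V} {a b c : ℝ}
    (hg : IntervalIntegrable g volume a b) (hc : c ∈ uIcc a b) :
    HasWeakDerivOn (fun t => ∫ s in c..t, g s) g (Ioo a b) :=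
  hasWeakDerivOn_of_absolutelyContinuousOnInterval (absolutelyContinuousOnInterval_integral hg hc)
    hg (hg.ae_hasDerivAt_integral.mono fun _ ht htab => ht htab c hc)

namespace HasWeakDerivOn

variable {F G f g : ℝ → V} {U U' : Set ℝ}

lemma mono (h : HasWeakDerivOn F g U) (hU : U' ⊆ U) : HasWeakDerivOn F g U' :=
  fun φ hφ hφc hφU => h φ hφ hφc (hφU.trans hU)

lemma sub (hF : HasWeakDerivOn F f U) (hG : HasWeakDerivOn G g U)
    (hFint : LocallyIntegrableOn F U) (hfint : LocallyIntegrableOn f U)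
    (hGint : LocallyIntegrableOn G U) (hgint : LocallyIntegrableOn g U) :
    HasWeakDerivOn (F - G) (f - g) U := by
  intro φ hφ hφc hφU
  have hφ' : Continuous (deriv φ) := hφ.continuous_deriv (by simp)
  have hφU' : tsupport (deriv φ) ⊆ U := tsupport_deriv_subset.trans hφU
  simp only [Pi.sub_apply, smul_sub]
  rw [integral_sub (integrable_smul_of_tsupport_subset hFint hφ' hφc.deriv hφU')
      (integrable_smul_of_tsupport_subset hGint hφ' hφc.deriv hφU'),
    integral_sub (integrable_smul_of_tsupport_subset hfint hφ.continuous hφc hφU)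
      (integrable_smul_of_tsupport_subset hgint hφ.continuous hφc hφU),
    hF φ hφ hφc hφU, hG φ hφ hφc hφU, neg_sub_neg, neg_sub]

lemma integral_smul_eq_zero_of_integral_eq_zero (hF : HasWeakDerivOn F 0 U)
    (hU : U.OrdConnected) {φ : ℝ → ℝ} (hφ : ContDiff ℝ ∞ φ) (hφc : HasCompactSupport φ)
    (hφU : tsupport φ ⊆ U) (hφ0 : ∫ t, φ t = 0) : ∫ t, φ t • F t = 0 := by
  obtain ⟨ψ, hψ, hψc, hψU, rfl⟩ := exists_deriv_eq_of_integral_eq_zero hU hφ hφc hφU hφ0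
  simpa using hF ψ hψ hψc hψU

lemma integral_smul_eq_integral_smul (hF : HasWeakDerivOn F 0 U) (hU : U.OrdConnected)
    (hFint : LocallyIntegrableOn F U) {φ η : ℝ → ℝ}
    (hφ : ContDiff ℝ ∞ φ) (hφc : HasCompactSupport φ) (hφU : tsupport φ ⊆ U)
    (hη : ContDiff ℝ ∞ η) (hηc : HasCompactSupport η) (hηU : tsupport η ⊆ U)
    (hη1 : ∫ t, η t = 1) : ∫ t, φ t • F t = (∫ t, φ t) • ∫ t, η t • F t := by
  have hφF := integrable_smul_of_tsupport_subset hFint hφ.continuous hφc hφU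
  have hηF := integrable_smul_of_tsupport_subset hFint hη.continuous hηc hηU
  have hφint := hφ.continuous.integrable_of_hasCompactSupport hφc (μ := volume)
  have hηint := hη.continuous.integrable_of_hasCompactSupport hηc (μ := volume)
  set m := ∫ t, φ t
  have hmean : ∫ t, φ t - m * η t = 0 := by
    rw [integral_sub hφint (hηint.const_mul m), integral_const_mul, hη1, mul_one, sub_self]
  have htsupp : tsupport (fun t => φ t - m * η t) ⊆ U :=
    (tsupport_sub φ (fun t => m * η t)).trans
      (union_subset hφU ((tsupport_mul_subset_right (f := fun _ => m)).trans hηU))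
  have horth := hF.integral_smul_eq_zero_of_integral_eq_zero hU (hφ.sub (contDiff_const.mul hη))
    (hφc.sub (hηc.mul_left (f := fun _ => m))) htsupp hmean
  simp only [sub_smul, mul_smul] at horth
  rwa [integral_sub hφF (hηF.fun_smul m), integral_smul, sub_eq_zero] at horth

variable [CompleteSpace V]

/-- The du Bois-Reymond lemma. -/
theorem exists_ae_eq_const (hF : HasWeakDerivOn F 0 U) (hU : IsOpen U) (hUc : U.OrdConnected)
    (hFint : LocallyIntegrableOn F U) : ∃ C, ∀ᵐ t, t ∈ U → F t = C := by
  rcases U.eq_empty_or_nonempty with rfl | hne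
  · exact ⟨0, by simp⟩
  obtain ⟨η, hη, hηc, hηU, hη1⟩ := exists_contDiff_integral_eq_one volume hU hne
  set C := ∫ t, η t • F t with hC
  have hconst : LocallyIntegrableOn (fun _ => C) U := locallyIntegrableOn_const C
  have hzero : ∀ᵐ t, t ∈ U → F t - C = 0 := by
    refine hU.ae_eq_zero_of_integral_contDiff_smul_eq_zero (hFint.sub hconst) fun φ hφ hφc hφU => ?_
    simp only [smul_sub]
    rw [integral_sub (integrable_smul_of_tsupport_subset hFint hφ.continuous hφc hφU)
        (integrable_smul_of_tsupport_subset hconst hφ.continuous hφc hφU), integral_smul_const,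
      hF.integral_smul_eq_integral_smul hUc hFint hφ hφc hφU hη hηc hηU hη1, hC, sub_self]
  exact ⟨C, hzero.mono fun t ht htU => sub_eq_zero.1 (ht htU)⟩

theorem exists_ae_eq_add_integral {a b c : ℝ} (hFg : HasWeakDerivOn F g (Ioo a b))
    (hF : LocallyIntegrableOn F (Ioo a b)) (hg : IntervalIntegrable g volume a b)
    (hc : c ∈ uIcc a b) : ∃ C, ∀ᵐ t, t ∈ Ioo a b → F t = C + ∫ s in c..t, g s := by
  have hg_loc : LocallyIntegrableOn g (Ioo a b) :=
    (hg.1.mono_set Ioo_subset_Ioc_self).locallyIntegrableOn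
  have hprim_loc : LocallyIntegrableOn (fun t => ∫ s in c..t, g s) (Ioo a b) :=
    ((intervalIntegral.continuousOn_primitive_interval' hg hc).mono
      (Ioo_subset_Icc_self.trans Icc_subset_uIcc)).locallyIntegrableOn measurableSet_Ioo
  have hsub := hFg.sub (hasWeakDerivOn_integral hg hc) hF hg_loc hprim_loc hg_loc
  rw [sub_self] at hsub
  obtain ⟨C, hC⟩ := hsub.exists_ae_eq_const isOpen_Ioo ordConnected_Ioo (hF.sub hprim_loc)
  exact ⟨C, hC.mono fun t ht htab => sub_eq_iff_eq_add.1 (ht htab)⟩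

theorem exists_eqOn_add_integral {a b c : ℝ} (hFg : HasWeakDerivOn F g (Ioo a b))
    (hF : ContinuousOn F (Ioo a b)) (hg : IntervalIntegrable g volume a b)
    (hc : c ∈ uIcc a b) : ∃ C, EqOn F (fun t => C + ∫ s in c..t, g s) (Ioo a b) := by
  obtain ⟨C, hC⟩ := hFg.exists_ae_eq_add_integral (hF.locallyIntegrableOn measurableSet_Ioo) hg hc
  have hprim : ContinuousOn (fun t => ∫ s in c..t, g s) (Ioo a b) :=
    (intervalIntegral.continuousOn_primitive_interval' hg hc).mono
      (Ioo_subset_Icc_self.trans Icc_subset_uIcc)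
  exact ⟨C, Measure.eqOn_open_of_ae_eq ((ae_restrict_iff' measurableSet_Ioo).2 hC) isOpen_Ioo hF
    (continuousOn_const.add hprim)⟩

theorem ae_hasDerivAt_Ioo {a b : ℝ} (hFg : HasWeakDerivOn F g (Ioo a b))
    (hF : ContinuousOn F (Ioo a b)) (hg : IntervalIntegrable g volume a b) :
    ∀ᵐ t, t ∈ Ioo a b → HasDerivAt F (g t) t := by
  obtain ⟨C, hC⟩ := hFg.exists_eqOn_add_integral hF hg left_mem_uIcc
  filter_upwards [hg.ae_hasDerivAt_integral] with t ht htab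
  have hprim := ht (Icc_subset_uIcc (Ioo_subset_Icc_self htab)) a left_mem_uIcc
  exact (hprim.const_add C).congr_of_eventuallyEq
    (hC.eventuallyEq_of_mem (isOpen_Ioo.mem_nhds htab))

end HasWeakDerivOn

lemma ae_mem_imp_of_forall_exists_nhdsWithin {X : Type*} [TopologicalSpace X]
    [SecondCountableTopology X] [MeasurableSpace X] {μ : Measure X} {U : Set X} {p : X → Prop}
    (h : ∀ x ∈ U, ∃ W ∈ 𝓝[U] x, ∀ᵐ t ∂μ, t ∈ W → p t) : ∀ᵐ t ∂μ, t ∈ U → p t := by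
  simp only [ae_iff, Classical.not_imp] at h ⊢
  refine measure_null_of_locally_null _ fun x hx => ?_
  obtain ⟨W, hW, hnull⟩ := h x hx.1
  refine ⟨{t | t ∈ W ∧ ¬p t}, ?_, hnull⟩
  filter_upwards [nhdsWithin_mono x (fun _ ht => ht.1) hW, self_mem_nhdsWithin] with t htW ht
  exact ⟨htW, ht.2⟩

theorem stmt_2_general [CompleteSpace V] {F g : ℝ → V} {U : Set ℝ} (hU : IsOpen U)
    (hF : ContinuousOn F U) (hg : LocallyIntegrableOn g U) (hFg : HasWeakDerivOn F g U) :
    ∀ᵐ t, t ∈ U → HasDerivAt F (g t) t := by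
  refine ae_mem_imp_of_forall_exists_nhdsWithin fun x hxU => ?_
  obtain ⟨r, hr, hrU⟩ := Metric.nhds_basis_closedBall.mem_iff.1 (hU.mem_nhds hxU)
  rw [Real.closedBall_eq_Icc] at hrU
  have hIoo : Ioo (x - r) (x + r) ⊆ U := Ioo_subset_Icc_self.trans hrU
  have hg_int : IntervalIntegrable g volume (x - r) (x + r) :=
    (intervalIntegrable_iff_integrableOn_Icc_of_le (by linarith)).2
      (hg.integrableOn_compact_subset hrU isCompact_Icc)
  exact ⟨Ioo (x - r) (x + r), mem_nhdsWithin_of_mem_nhds (Ioo_mem_nhds (by linarith) (by linarith)),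
    (hFg.mono hIoo).ae_hasDerivAt_Ioo (hF.mono hIoo) hg_int⟩

end

/-- A continuous map `F : (a,b) → V` into a Banach space possessing an
integrable Bochner weak derivative `g` is differentiable almost everywhere on `(a,b)`,
with derivative `g(t)` at almost every `t`. -/
theorem stmt_2
    {V : Type*} [NormedAddCommGroup V] [NormedSpace ℝ V] [CompleteSpace V]
    (a b : ℝ) (hab : a < b) (F g : ℝ → V)
    (hF : ContinuousOn F (Set.Ioo a b))
    (hg_meas : StronglyMeasurable g)
    (hg_int : Integrable g (volume.restrict (Set.Ioo a b)))
    (hweak : ∀ φ : ℝ → ℝ, ContDiff ℝ (⊤ : ℕ∞) φ → HasCompactSupport φ →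
      tsupport φ ⊆ Set.Ioo a b →
      ∫ t in Set.Ioo a b, deriv φ t • F t = - ∫ t in Set.Ioo a b, φ t • g t) :
    ∀ᵐ t : ℝ, t ∈ Set.Ioo a b → HasDerivWithinAt F (g t) (Set.Ioo a b) t := by
  have hFg : HasWeakDerivOn F g (Ioo a b) := hasWeakDerivOn_iff_setIntegral.2 hweak
  exact (stmt_2_general isOpen_Ioo hF (IntegrableOn.locallyIntegrableOn hg_int) hFg).mono
    fun t ht htab => (ht htab).hasDerivWithinAt
end

section
/- Let V be a Banach space, n ≥ 2, and let Ω ⊆ ℝⁿ be an open set. Let F : Ω → V be continuous, and suppose there exists a strongly measurable, Bochner-integrable map g : Ω → V such that ∫_Ω (∂₁φ)(x) · F(x) dx = −∫_Ω φ(x) · g(x) dx (Bochner integrals with respect to Lebesgue measure) for every smooth compactly supported φ : Ω → ℝ. Then for Lebesgue-almost every y ∈ ℝ^{n−1}, the map t ↦ F(t, y) is differentiable at almost every t in the open slice {t ∈ ℝ : (t,y) ∈ Ω}. -/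
open MeasureTheory Set

/-!
The claim is local, so `Ω` may be replaced by a box `I ×ˢ B`. Testing the weak derivative against
products `η t * ψ y`, Fubini and the fundamental lemma of the calculus of variations in `y` give,
for each fixed `η` and almost every `y`, `∫ (η' t • F (t, y) + η t • g (t, y)) dt = 0`. The
exceptional set of `y` depends on `η`, so only countably many `η` may be used: smooth approximations
of the indicators of intervals with rational end points `q` and `r`. Their derivatives concentrate
at `q` and `r`, and in the limit `F (r, y) - F (q, y) = ∫ t in q..r, g (t, y)`. By continuity of `F`
this persists for real end points, and the Lebesgue differentiation theorem applies to `g (·, y)`.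
-/

open Filter Topology

section SmoothWindow

/-- A smooth step rising from `0` to `1` on `[s, s + δ]`, for `0 < δ`. Its derivatives form an
approximate identity at `s` as `δ → 0+`. -/
noncomputable def smoothStep (s δ u : ℝ) : ℝ := Real.smoothTransition ((u - s) / δ)

/-- A smooth approximation of the indicator of `(s, t]` as `δ → 0+`; for `t < s`, of minus the
indicator of `(t, s]`, matching the orientation of `∫ u in s..t`. -/
noncomputable def smoothWindow (s t δ : ℝ) : ℝ → ℝ := smoothStep s δ - smoothStep t δ

variable {s t δ u : ℝ}

lemma contDiff_smoothStep {n : ℕ∞} (s δ : ℝ) : ContDiff ℝ n (smoothStep s δ) :=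
  Real.smoothTransition.contDiff.comp (by fun_prop)

lemma differentiable_smoothStep (s δ : ℝ) : Differentiable ℝ (smoothStep s δ) :=
  (contDiff_smoothStep (n := 1) s δ).differentiable one_ne_zero

lemma continuous_deriv_smoothStep (s δ : ℝ) : Continuous (deriv (smoothStep s δ)) :=
  (contDiff_smoothStep (n := 1) s δ).continuous_deriv le_rfl

lemma monotone_smoothStep (s : ℝ) (hδ : 0 ≤ δ) : Monotone (smoothStep s δ) := fun _ _ huv =>
  Real.smoothTransition.monotone (by gcongr)

lemma norm_smoothStep_le_one (s δ u : ℝ) : ‖smoothStep s δ u‖ ≤ 1 := by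
  rw [smoothStep, Real.norm_of_nonneg (Real.smoothTransition.nonneg _)]
  exact Real.smoothTransition.le_one _

lemma smoothStep_of_le (hδ : 0 ≤ δ) (hu : u ≤ s) : smoothStep s δ u = 0 :=
  Real.smoothTransition.zero_of_nonpos (div_nonpos_of_nonpos_of_nonneg (sub_nonpos.2 hu) hδ)

lemma smoothStep_of_add_le (hδ : 0 < δ) (hu : s + δ ≤ u) : smoothStep s δ u = 1 :=
  Real.smoothTransition.one_of_one_le ((one_le_div hδ).2 (by linarith))

lemma deriv_smoothStep_of_lt (hδ : 0 ≤ δ) (hu : u < s) : deriv (smoothStep s δ) u = 0 := by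
  have h : smoothStep s δ =ᶠ[𝓝 u] fun _ => 0 := by
    filter_upwards [Iio_mem_nhds hu] with v hv using smoothStep_of_le hδ (le_of_lt hv)
  rw [h.deriv_eq, deriv_const]

lemma deriv_smoothStep_of_add_lt (hδ : 0 < δ) (hu : s + δ < u) :
    deriv (smoothStep s δ) u = 0 := by
  have h : smoothStep s δ =ᶠ[𝓝 u] fun _ => 1 := by
    filter_upwards [Ioi_mem_nhds hu] with v hv using smoothStep_of_add_le hδ (le_of_lt hv)
  rw [h.deriv_eq, deriv_const]

lemma hasCompactSupport_deriv_smoothStep (s : ℝ) (hδ : 0 < δ) :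
    HasCompactSupport (deriv (smoothStep s δ)) := by
  refine HasCompactSupport.intro (isCompact_Icc : IsCompact (Icc s (s + δ))) fun u hu => ?_
  rcases lt_or_ge u s with hus | hus
  · exact deriv_smoothStep_of_lt hδ.le hus
  · exact deriv_smoothStep_of_add_lt hδ (not_le.1 fun hle => hu ⟨hus, hle⟩)

lemma eventually_smoothStep_eq_one (hu : s < u) : ∀ᶠ δ in 𝓝[>] 0, smoothStep s δ u = 1 := by
  filter_upwards [Ioo_mem_nhdsGT (sub_pos.2 hu)] with δ hδ
  exact smoothStep_of_add_le hδ.1 (by linarith [hδ.2])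

lemma contDiff_smoothWindow {n : ℕ∞} (s t δ : ℝ) : ContDiff ℝ n (smoothWindow s t δ) :=
  (contDiff_smoothStep s δ).sub (contDiff_smoothStep t δ)

lemma tsupport_smoothWindow_subset (s t : ℝ) (hδ : 0 < δ) :
    tsupport (smoothWindow s t δ) ⊆ Icc (min s t) (max s t + δ) := by
  refine closure_minimal (fun u hu => ?_) isClosed_Icc
  contrapose! hu
  rw [Function.notMem_support, smoothWindow, Pi.sub_apply]
  rcases lt_or_ge u (min s t) with h | h
  · rw [lt_min_iff] at h
    rw [smoothStep_of_le hδ.le h.1.le, smoothStep_of_le hδ.le h.2.le, sub_zero]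
  · have hmax : max s t + δ < u := not_le.1 fun hle => hu ⟨h, hle⟩
    rw [smoothStep_of_add_le hδ (by linarith [le_max_left s t]),
      smoothStep_of_add_le hδ (by linarith [le_max_right s t]), sub_self]

lemma hasCompactSupport_smoothWindow (s t : ℝ) (hδ : 0 < δ) :
    HasCompactSupport (smoothWindow s t δ) :=
  isCompact_Icc.of_isClosed_subset (isClosed_tsupport _) (tsupport_smoothWindow_subset s t hδ)

lemma eventually_tsupport_smoothWindow_subset {I : Set ℝ} (hI : IsOpen I)
    (hIc : I.OrdConnected) (hs : s ∈ I) (ht : t ∈ I) :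
    ∀ᶠ δ in 𝓝[>] 0, tsupport (smoothWindow s t δ) ⊆ I := by
  have hmin : min s t ∈ I := by rcases min_choice s t with h | h <;> rwa [h]
  have hmax : max s t ∈ I := by rcases max_choice s t with h | h <;> rwa [h]
  have hshift : ∀ᶠ δ in 𝓝[>] 0, max s t + δ ∈ I := by
    have h : Tendsto (max s t + ·) (𝓝[>] 0) (𝓝 (max s t + 0)) :=
      (continuous_const_add _).continuousAt.mono_left nhdsWithin_le_nhds
    exact h (hI.mem_nhds (by rwa [add_zero]))
  filter_upwards [hshift, self_mem_nhdsWithin] with δ hδI hδ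
  exact (tsupport_smoothWindow_subset s t hδ).trans (hIc.out hmin hδI)

end SmoothWindow

section Line

variable {V : Type*} [NormedAddCommGroup V] [NormedSpace ℝ V]

lemma integrable_comp_smul_of_hasCompactSupport {X Y : Type*} [TopologicalSpace X]
    [TopologicalSpace Y] [MeasurableSpace Y] [OpensMeasurableSpace Y] {ν : Measure Y} {f : Y → V}
    {π : Y → X} {w : X → ℝ} (hf : Integrable f ν) (hπ : Continuous π) (hw : Continuous w)
    (hwc : HasCompactSupport w) : Integrable (fun y => w (π y) • f y) ν := by
  obtain ⟨C, hC⟩ := hwc.exists_bound_of_continuous hw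
  exact hf.bdd_smul C (hw.comp hπ).aestronglyMeasurable (.of_forall fun y => hC (π y))

lemma integrable_smoothStep_smul {ν : Measure ℝ} {p : ℝ → V} (hp : Integrable p ν) (s δ : ℝ) :
    Integrable (fun u => smoothStep s δ u • p u) ν :=
  hp.bdd_smul 1 (differentiable_smoothStep s δ).continuous.aestronglyMeasurable
    (.of_forall (norm_smoothStep_le_one s δ))

lemma tendsto_integral_smoothStep_smul {ν : Measure ℝ} {p : ℝ → V} (hp : Integrable p ν) (s : ℝ) :
    Tendsto (fun δ => ∫ u, smoothStep s δ u • p u ∂ν) (𝓝[>] 0) (𝓝 (∫ u in Ioi s, p u ∂ν)) := by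
  rw [← integral_indicator measurableSet_Ioi]
  refine tendsto_integral_filter_of_dominated_convergence (fun u => ‖p u‖)
    (.of_forall fun δ => (integrable_smoothStep_smul hp s δ).aestronglyMeasurable)
    (.of_forall fun δ => .of_forall fun u => ?_) hp.norm (.of_forall fun u => ?_)
  · rw [norm_smul]
    exact mul_le_of_le_one_left (norm_nonneg _) (norm_smoothStep_le_one s δ u)
  · refine tendsto_const_nhds.congr' ?_
    by_cases hu : s < u
    · filter_upwards [eventually_smoothStep_eq_one hu] with δ hδ
      rw [indicator_of_mem (mem_Ioi.2 hu), hδ, one_smul]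
    · filter_upwards [self_mem_nhdsWithin] with δ hδ
      rw [indicator_of_notMem (mt mem_Ioi.1 hu), smoothStep_of_le (le_of_lt hδ) (not_lt.1 hu),
        zero_smul]

lemma tendstoUniformlyOn_deriv_smoothStep {s : ℝ} {U : Set ℝ} (hU : U ∈ 𝓝 s) :
    TendstoUniformlyOn (fun δ => deriv (smoothStep s δ)) 0 (𝓝[>] 0) Uᶜ := by
  obtain ⟨r, hr, hball⟩ := Metric.mem_nhds_iff.1 hU
  rw [Metric.tendstoUniformlyOn_iff]
  intro ε hε
  filter_upwards [Ioo_mem_nhdsGT hr] with δ ⟨hδ, hδr⟩ u hu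
  have hru : r ≤ |u - s| := not_lt.1 fun hlt => hu (hball (by rwa [Metric.mem_ball, Real.dist_eq]))
  have hzero : deriv (smoothStep s δ) u = 0 := by
    rcases le_abs.1 hru with h | h
    · exact deriv_smoothStep_of_add_lt hδ (by linarith)
    · exact deriv_smoothStep_of_lt hδ.le (by linarith)
  rwa [hzero, Pi.zero_apply, dist_self]

lemma tendsto_integral_deriv_smoothStep {a b s : ℝ} (hs : s ∈ Ioo a b) :
    Tendsto (fun δ => ∫ u in Icc a b, deriv (smoothStep s δ) u) (𝓝[>] 0) (𝓝 1) := by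
  refine tendsto_const_nhds.congr' ?_
  filter_upwards [eventually_smoothStep_eq_one hs.2, self_mem_nhdsWithin] with δ hb hδ
  rw [integral_Icc_eq_integral_Ioc, ← intervalIntegral.integral_of_le (hs.1.trans hs.2).le,
    intervalIntegral.integral_deriv_eq_sub (fun u _ => differentiable_smoothStep s δ u)
      ((continuous_deriv_smoothStep s δ).intervalIntegrable _ _),
    hb, smoothStep_of_le (le_of_lt hδ) hs.1.le, sub_zero]

variable {I : Set ℝ} {f p : ℝ → V}

lemma integral_Ioi_restrict_sub {s t : ℝ} (hst : uIcc s t ⊆ I) (hp : IntegrableOn p I) :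
    (∫ u in Ioi s, p u ∂volume.restrict I) - ∫ u in Ioi t, p u ∂volume.restrict I
      = ∫ u in s..t, p u := by
  rw [intervalIntegral.integral_Ioi_sub_Ioi' (Integrable.integrableOn hp)
    (Integrable.integrableOn hp)]
  simp only [intervalIntegral.intervalIntegral_eq_integral_uIoc,
    Measure.restrict_restrict measurableSet_uIoc,
    inter_eq_self_of_subset_left (uIoc_subset_uIcc.trans hst)]

variable [CompleteSpace V]

lemma tendsto_setIntegral_deriv_smoothStep_smul {s : ℝ} (hI : MeasurableSet I) (hs : I ∈ 𝓝 s)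
    (hf : IntegrableOn f I) (hfs : ContinuousAt f s) :
    Tendsto (fun δ => ∫ u in I, deriv (smoothStep s δ) u • f u) (𝓝[>] 0) (𝓝 (f s)) := by
  obtain ⟨r, hr, hrI⟩ := Metric.nhds_basis_closedBall.mem_iff.1 hs
  rw [Real.closedBall_eq_Icc] at hrI
  have hsr : s ∈ Ioo (s - r) (s + r) := ⟨by linarith, by linarith⟩
  refine tendsto_setIntegral_peak_smul_of_integrableOn_of_tendsto hI measurableSet_Icc hrI
    (mem_nhdsWithin_of_mem_nhds (Icc_mem_nhds hsr.1 hsr.2)) measure_Icc_lt_top.ne ?_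
    (fun U hU hsU => (tendstoUniformlyOn_deriv_smoothStep (hU.mem_nhds hsU)).mono
      (sdiff_subset_compl _ _))
    (tendsto_integral_deriv_smoothStep hsr)
    (.of_forall fun δ => (continuous_deriv_smoothStep s δ).aestronglyMeasurable) hf
    (hfs.mono_left nhdsWithin_le_nhds)
  filter_upwards [self_mem_nhdsWithin] with δ hδ u _
  exact (monotone_smoothStep s (le_of_lt hδ)).deriv_nonneg

lemma tendsto_setIntegral_smoothWindow {s t : ℝ} (hI : IsOpen I) (hst : uIcc s t ⊆ I)
    (hf : IntegrableOn f I) (hfc : ContinuousOn f I) (hp : IntegrableOn p I) :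
    Tendsto (fun δ => ∫ u in I, (deriv (smoothWindow s t δ) u • f u + smoothWindow s t δ u • p u))
      (𝓝[>] 0) (𝓝 (f s - f t + ∫ u in s..t, p u)) := by
  have hpeak {x : ℝ} (hx : x ∈ I) := tendsto_setIntegral_deriv_smoothStep_smul hI.measurableSet
    (hI.mem_nhds hx) hf (hfc.continuousAt (hI.mem_nhds hx))
  rw [← integral_Ioi_restrict_sub hst hp]
  refine (((hpeak (hst left_mem_uIcc)).sub (hpeak (hst right_mem_uIcc))).add
    ((tendsto_integral_smoothStep_smul hp s).sub
      (tendsto_integral_smoothStep_smul hp t))).congr' ?_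
  filter_upwards [self_mem_nhdsWithin] with δ hδ
  have hf' (x : ℝ) : IntegrableOn (fun u => deriv (smoothStep x δ) u • f u) I :=
    integrable_comp_smul_of_hasCompactSupport hf continuous_id (continuous_deriv_smoothStep x δ)
      (hasCompactSupport_deriv_smoothStep x hδ)
  have hp' := integrable_smoothStep_smul hp (δ := δ)
  simp only [smoothWindow, deriv_sub (differentiable_smoothStep s δ _)
    (differentiable_smoothStep t δ _), Pi.sub_apply, sub_smul]
  rw [integral_add (by exact (hf' s).sub (hf' t)) (by exact (hp' s).sub (hp' t)),
    integral_sub (hf' s) (hf' t), integral_sub (hp' s) (hp' t)]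

lemma sub_eq_integral_of_frequently_integral_smoothWindow_eq_zero {s t : ℝ} (hI : IsOpen I)
    (hst : uIcc s t ⊆ I) (hf : IntegrableOn f I) (hfc : ContinuousOn f I) (hp : IntegrableOn p I)
    (h : ∃ᶠ δ in 𝓝[>] 0, ∫ u in I,
      (deriv (smoothWindow s t δ) u • f u + smoothWindow s t δ u • p u) = 0) :
    f t - f s = ∫ u in s..t, p u := by
  have hzero : f s - f t + ∫ u in s..t, p u = 0 :=
    tendsto_nhds_unique_of_frequently_eq (tendsto_setIntegral_smoothWindow hI hst hf hfc hp)
      tendsto_const_nhds h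
  rw [← neg_sub, neg_eq_iff_add_eq_zero, hzero]

lemma ae_hasDerivAt_of_forall_dense_sub_eq_integral {D : Set ℝ} (hI : IsOpen I)
    (hIc : I.OrdConnected) (hD : Dense D) (hf : ContinuousOn f I) (hp : IntegrableOn p I)
    (h : ∀ s ∈ I ∩ D, ∀ t ∈ I ∩ D, f t - f s = ∫ u in s..t, p u) :
    ∀ᵐ t, t ∈ I → HasDerivAt f (p t) t := by
  rcases I.eq_empty_or_nonempty with rfl | hne
  · simp
  obtain ⟨c, hc⟩ := hD.inter_open_nonempty I hI hne
  have hpI : Integrable (I.indicator p) := hp.integrable_indicator hI.measurableSet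
  have hcont : Continuous fun t => ∫ u in c..t, I.indicator p u :=
    intervalIntegral.continuous_primitive (fun _ _ => hpI.intervalIntegrable) c
  have hD_eq : EqOn f (fun t => f c + ∫ u in c..t, I.indicator p u) (I ∩ D) := fun t ht => by
    have hct : ∫ u in c..t, I.indicator p u = ∫ u in c..t, p u :=
      intervalIntegral.integral_congr fun u hu =>
        indicator_of_mem (hIc.uIcc_subset hc.1 ht.1 hu) p
    simp only [hct, ← h c hc t ht, add_sub_cancel]
  have hI_eq : EqOn f (fun t => f c + ∫ u in c..t, I.indicator p u) I :=
    hD_eq.of_subset_closure hf (continuous_const.add hcont).continuousOn inter_subset_left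
      (hD.open_subset_closure_inter hI)
  filter_upwards [LocallyIntegrable.ae_hasDerivAt_integral hpI.locallyIntegrable] with t ht htI
  rw [← indicator_of_mem htI p]
  exact ((ht c).const_add (f c)).congr_of_eventuallyEq
    (hI_eq.eventuallyEq_of_mem (hI.mem_nhds htI))

end Line

section Product

lemma fderiv_mul_prod_apply_one_zero {E : Type*} [NormedAddCommGroup E] [NormedSpace ℝ E]
    {η : ℝ → ℝ} {ψ : E → ℝ} {x : ℝ × E} (hη : DifferentiableAt ℝ η x.1)
    (hψ : DifferentiableAt ℝ ψ x.2) :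
    fderiv ℝ (fun x : ℝ × E => η x.1 * ψ x.2) x (1, 0) = deriv η x.1 * ψ x.2 := by
  have hη' : HasFDerivAt (fun x : ℝ × E => η x.1) _ x := hη.hasFDerivAt.comp x hasFDerivAt_fst
  have hψ' : HasFDerivAt (fun x : ℝ × E => ψ x.2) _ x := hψ.hasFDerivAt.comp x hasFDerivAt_snd
  rw [(hη'.fun_mul hψ').fderiv]
  simp [mul_comm]

lemma tsupport_mul_prod_subset {X Y : Type*} [TopologicalSpace X] [TopologicalSpace Y]
    (η : X → ℝ) (ψ : Y → ℝ) :
    tsupport (fun x : X × Y => η x.1 * ψ x.2) ⊆ tsupport η ×ˢ tsupport ψ :=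
  closure_minimal (fun _ hx => ⟨subset_tsupport η (left_ne_zero_of_mul hx),
    subset_tsupport ψ (right_ne_zero_of_mul hx)⟩) ((isClosed_tsupport η).prod (isClosed_tsupport ψ))

lemma ae_integrableOn_slice {X Y W : Type*} [MeasurableSpace X] [MeasurableSpace Y]
    [NormedAddCommGroup W] {ν : Measure X} {μ : Measure Y} [SFinite ν] [SFinite μ]
    {I : Set X} {B : Set Y} {f : X × Y → W} (hB : MeasurableSet B)
    (hf : IntegrableOn f (I ×ˢ B) (ν.prod μ)) :
    ∀ᵐ y ∂μ, y ∈ B → IntegrableOn (fun t => f (t, y)) I ν := by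
  rw [IntegrableOn, ← Measure.prod_restrict] at hf
  exact (ae_restrict_iff' hB).1 hf.prod_left_ae

lemma ae_ae_of_forall_exists_mem_nhdsWithin {X Y : Type*} [TopologicalSpace X]
    [TopologicalSpace Y] [SecondCountableTopology (X × Y)] [MeasurableSpace X] [MeasurableSpace Y]
    {ν : Measure X} {μ : Measure Y} {Ω : Set (X × Y)} {P : X → Y → Prop}
    (h : ∀ x ∈ Ω, ∃ U ∈ 𝓝[Ω] x, ∀ᵐ y ∂μ, ∀ᵐ t ∂ν, (t, y) ∈ U → P t y) :
    ∀ᵐ y ∂μ, ∀ᵐ t ∂ν, (t, y) ∈ Ω → P t y := by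
  choose! U hU hP using h
  obtain ⟨T, hTΩ, hT, hcover⟩ := TopologicalSpace.countable_cover_nhdsWithin hU
  have hall : ∀ᵐ y ∂μ, ∀ x ∈ T, ∀ᵐ t ∂ν, (t, y) ∈ U x → P t y :=
    (ae_ball_iff hT).2 fun x hx => hP x (hTΩ hx)
  filter_upwards [hall] with y hy
  filter_upwards [(ae_ball_iff hT).2 hy] with t ht htΩ
  obtain ⟨x, hx, htx⟩ := mem_iUnion₂.1 (hcover htΩ)
  exact ht x hx htx

variable {E V : Type*} [NormedAddCommGroup E] [NormedSpace ℝ E] [MeasurableSpace E]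
  [NormedAddCommGroup V] [NormedSpace ℝ V] {μ : Measure E} {Ω : Set (ℝ × E)} {F g : ℝ × E → V}

/-- `g` is the weak partial derivative of `F : ℝ × E → V` on `Ω` in the direction of the factor `ℝ`,
for the product of Lebesgue measure with a reference measure `μ` on `E`. Integrability of `F` and
`g` is not part of the definition. -/
def HasWeakFstDeriv (μ : Measure E) (Ω : Set (ℝ × E)) (F g : ℝ × E → V) : Prop :=
  ∀ φ : ℝ × E → ℝ, ContDiff ℝ (⊤ : ℕ∞) φ → HasCompactSupport φ → tsupport φ ⊆ Ω →
    ∫ x in Ω, (fderiv ℝ φ x (1, 0)) • F x ∂volume.prod μ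
      = -∫ x in Ω, φ x • g x ∂volume.prod μ

lemma HasWeakFstDeriv.mono {U : Set (ℝ × E)} (h : HasWeakFstDeriv μ Ω F g) (hU : U ⊆ Ω) :
    HasWeakFstDeriv μ U F g := by
  intro φ hφ hφc hφU
  have hd {x : ℝ × E} (hx : x ∉ tsupport φ) : fderiv ℝ φ x (1, 0) • F x = 0 := by
    simp [fderiv_of_notMem_tsupport ℝ hx]
  have hv {x : ℝ × E} (hx : x ∉ tsupport φ) : φ x • g x = 0 := by
    simp [image_eq_zero_of_notMem_tsupport hx]
  have hφΩ := hφU.trans hU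
  have htest := h φ hφ hφc hφΩ
  rwa [setIntegral_eq_integral_of_forall_compl_eq_zero fun x hx => hd (mt (@hφΩ x) hx),
    setIntegral_eq_integral_of_forall_compl_eq_zero fun x hx => hv (mt (@hφΩ x) hx),
    ← setIntegral_eq_integral_of_forall_compl_eq_zero fun x hx => hd (mt (@hφU x) hx),
    ← setIntegral_eq_integral_of_forall_compl_eq_zero fun x hx => hv (mt (@hφU x) hx)] at htest

variable {I : Set ℝ} {B : Set E} {η : ℝ → ℝ} [BorelSpace E]

lemma HasWeakFstDeriv.integral_smul_deriv_smul_add_smul_eq_zero {ψ : E → ℝ}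
    (h : HasWeakFstDeriv μ (I ×ˢ B) F g) (hF : IntegrableOn F (I ×ˢ B) (volume.prod μ))
    (hg : IntegrableOn g (I ×ˢ B) (volume.prod μ)) (hη : ContDiff ℝ (⊤ : ℕ∞) η)
    (hηc : HasCompactSupport η) (hηI : tsupport η ⊆ I) (hψ : ContDiff ℝ (⊤ : ℕ∞) ψ)
    (hψc : HasCompactSupport ψ) (hψB : tsupport ψ ⊆ B) :
    ∫ x in I ×ˢ B, ψ x.2 • (deriv η x.1 • F x + η x.1 • g x) ∂volume.prod μ = 0 := by
  have hη1 : ContDiff ℝ 1 η := hη.of_le (by simp)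
  have hsupp := tsupport_mul_prod_subset η ψ
  have htest := h (fun x => η x.1 * ψ x.2) ((hη.comp contDiff_fst).mul (hψ.comp contDiff_snd))
    ((hηc.isCompact.prod hψc.isCompact).of_isClosed_subset (isClosed_tsupport _) hsupp)
    (hsupp.trans (prod_mono hηI hψB))
  simp only [fderiv_mul_prod_apply_one_zero (hη1.differentiable one_ne_zero _)
    (hψ.differentiable (by simp) _)] at htest
  simp only [mul_comm _ (ψ _), mul_smul] at htest
  have hdF : IntegrableOn (fun x => deriv η x.1 • F x) (I ×ˢ B) (volume.prod μ) :=
    integrable_comp_smul_of_hasCompactSupport hF continuous_fst (hη1.continuous_deriv le_rfl)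
      hηc.deriv
  have hηg : IntegrableOn (fun x => η x.1 • g x) (I ×ˢ B) (volume.prod μ) :=
    integrable_comp_smul_of_hasCompactSupport hg continuous_fst hη1.continuous hηc
  simp only [smul_add]
  rw [integral_add
    (integrable_comp_smul_of_hasCompactSupport hdF continuous_snd hψ.continuous hψc)
    (integrable_comp_smul_of_hasCompactSupport hηg continuous_snd hψ.continuous hψc),
    htest, neg_add_cancel]

variable [FiniteDimensional ℝ E] [CompleteSpace V] [SFinite μ]

theorem HasWeakFstDeriv.ae_integral_slice_eq_zero (h : HasWeakFstDeriv μ (I ×ˢ B) F g)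
    (hB : IsOpen B) (hF : IntegrableOn F (I ×ˢ B) (volume.prod μ))
    (hg : IntegrableOn g (I ×ˢ B) (volume.prod μ)) (hη : ContDiff ℝ (⊤ : ℕ∞) η)
    (hηc : HasCompactSupport η) (hηI : tsupport η ⊆ I) :
    ∀ᵐ y ∂μ, y ∈ B → ∫ t in I, (deriv η t • F (t, y) + η t • g (t, y)) = 0 := by
  have hη' : Continuous (deriv η) := hη.continuous_deriv (by simp)
  have hint : IntegrableOn (fun x => deriv η x.1 • F x + η x.1 • g x) (I ×ˢ B) (volume.prod μ) :=
    (integrable_comp_smul_of_hasCompactSupport hF continuous_fst hη' hηc.deriv).add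
      (integrable_comp_smul_of_hasCompactSupport hg continuous_fst hη.continuous hηc)
  rw [IntegrableOn, ← Measure.prod_restrict] at hint
  refine hB.ae_eq_zero_of_integral_contDiff_smul_eq_zero
    (IntegrableOn.locallyIntegrableOn hint.integral_prod_right) fun ψ hψ hψc hψB => ?_
  have hψint := integrable_comp_smul_of_hasCompactSupport hint continuous_snd hψ.continuous hψc
  have hzero := h.integral_smul_deriv_smul_add_smul_eq_zero hF hg hη hηc hηI hψ hψc hψB
  rw [← Measure.prod_restrict, integral_prod_symm _ hψint] at hzero
  simp only [integral_smul] at hzero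
  rwa [setIntegral_eq_integral_of_forall_compl_eq_zero fun y hy => by
    rw [image_eq_zero_of_notMem_tsupport (mt (@hψB y) hy), zero_smul]] at hzero

theorem HasWeakFstDeriv.ae_sub_eq_integral {s t : ℝ}
    (h : HasWeakFstDeriv μ (I ×ˢ B) F g) (hI : IsOpen I) (hIc : I.OrdConnected)
    (hB : IsOpen B) (hFc : ContinuousOn F (I ×ˢ B))
    (hF : IntegrableOn F (I ×ˢ B) (volume.prod μ)) (hg : IntegrableOn g (I ×ˢ B) (volume.prod μ))
    (hs : s ∈ I) (ht : t ∈ I) :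
    ∀ᵐ y ∂μ, y ∈ B → F (t, y) - F (s, y) = ∫ u in s..t, g (u, y) := by
  obtain ⟨δ, -, hδ_pos, hδ_lim⟩ := exists_seq_strictAnti_tendsto (0 : ℝ)
  have hδ : Tendsto δ atTop (𝓝[>] 0) :=
    tendsto_nhdsWithin_iff.2 ⟨hδ_lim, .of_forall hδ_pos⟩
  have htest : ∀ᵐ y ∂μ, ∀ k, tsupport (smoothWindow s t (δ k)) ⊆ I → y ∈ B →
      ∫ u in I, (deriv (smoothWindow s t (δ k)) u • F (u, y)
        + smoothWindow s t (δ k) u • g (u, y)) = 0 := by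
    simp only [ae_all_iff]
    exact fun k hk => h.ae_integral_slice_eq_zero hB hF hg (contDiff_smoothWindow s t _)
      (hasCompactSupport_smoothWindow s t (hδ_pos k)) hk
  filter_upwards [htest, ae_integrableOn_slice hB.measurableSet hF,
    ae_integrableOn_slice hB.measurableSet hg] with y hy hFy hgy hyB
  refine sub_eq_integral_of_frequently_integral_smoothWindow_eq_zero hI (hIc.uIcc_subset hs ht)
    (hFy hyB) (hFc.comp (by fun_prop) fun u hu => ⟨hu, hyB⟩) (hgy hyB)
    (hδ.frequently (Eventually.frequently ?_))
  filter_upwards [hδ.eventually (eventually_tsupport_smoothWindow_subset hI hIc hs ht)] with k hk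
  exact hy k hk hyB

theorem HasWeakFstDeriv.ae_ae_hasDerivAt_of_prod
    (h : HasWeakFstDeriv μ (I ×ˢ B) F g) (hI : IsOpen I) (hIc : I.OrdConnected)
    (hB : IsOpen B) (hFc : ContinuousOn F (I ×ˢ B))
    (hF : IntegrableOn F (I ×ˢ B) (volume.prod μ)) (hg : IntegrableOn g (I ×ˢ B) (volume.prod μ)) :
    ∀ᵐ y ∂μ, ∀ᵐ t, (t, y) ∈ I ×ˢ B → HasDerivAt (fun s => F (s, y)) (g (t, y)) t := by
  have hrat : ∀ᵐ y ∂μ, ∀ q r : ℚ, (q : ℝ) ∈ I → (r : ℝ) ∈ I → y ∈ B →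
      F (r, y) - F (q, y) = ∫ u in q..r, g (u, y) := by
    simp only [ae_all_iff]
    exact fun q r hq hr => h.ae_sub_eq_integral hI hIc hB hFc hF hg hq hr
  filter_upwards [hrat, ae_integrableOn_slice hB.measurableSet hg] with y hy hgy
  by_cases hyB : y ∈ B
  · have hderiv : ∀ᵐ t, t ∈ I → HasDerivAt (fun s => F (s, y)) (g (t, y)) t := by
      refine ae_hasDerivAt_of_forall_dense_sub_eq_integral hI hIc Rat.denseRange_cast
        (hFc.comp (by fun_prop) fun u hu => ⟨hu, hyB⟩) (hgy hyB) ?_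
      rintro _ ⟨hq, q, rfl⟩ _ ⟨hr, r, rfl⟩
      exact hy q r hq hr hyB
    exact hderiv.mono fun t ht htB => ht htB.1
  · exact .of_forall fun t ht => absurd ht.2 hyB

end Product

theorem stmt_3_general {E V : Type*} [NormedAddCommGroup E] [NormedSpace ℝ E]
    [FiniteDimensional ℝ E] [MeasurableSpace E] [BorelSpace E] [NormedAddCommGroup V]
    [NormedSpace ℝ V] [CompleteSpace V] {μ : Measure E} [IsLocallyFiniteMeasure μ]
    {Ω : Set (ℝ × E)} {F g : ℝ × E → V} (hΩ : IsOpen Ω) (hF : ContinuousOn F Ω)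
    (hg : LocallyIntegrableOn g Ω (volume.prod μ)) (hweak : HasWeakFstDeriv μ Ω F g) :
    ∀ᵐ y ∂μ, ∀ᵐ t, (t, y) ∈ Ω → HasDerivAt (fun s => F (s, y)) (g (t, y)) t := by
  refine ae_ae_of_forall_exists_mem_nhdsWithin fun x hx => ?_
  have hF_int := hF.locallyIntegrableOn (μ := volume.prod μ) hΩ.measurableSet x hx
  have hg_int := hg x hx
  rw [hΩ.nhdsWithin_eq hx] at hF_int hg_int ⊢
  obtain ⟨N, hN, hFN⟩ := hF_int
  obtain ⟨M, hM, hgM⟩ := hg_int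
  obtain ⟨r, hr, hball⟩ := Metric.mem_nhds_iff.1 (inter_mem (inter_mem hN hM) (hΩ.mem_nhds hx))
  refine ⟨Metric.ball x r, Metric.ball_mem_nhds x hr, ?_⟩
  rw [← ball_prod_same x.1 x.2 r] at hball ⊢
  exact (hweak.mono fun z hz => (hball hz).2).ae_ae_hasDerivAt_of_prod Metric.isOpen_ball
    (convex_ball x.1 r).ordConnected Metric.isOpen_ball (hF.mono fun z hz => (hball hz).2)
    (hFN.mono_set fun z hz => (hball hz).1.1) (hgM.mono_set fun z hz => (hball hz).1.2)

/-- If `F : Ω → V` (with `Ω ⊆ ℝ × ℝ^{n-1} = ℝⁿ`, `n = m + 1 ≥ 2`, open)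
is continuous and has an integrable first Bochner weak partial derivative, then for almost
every `y ∈ ℝ^{n-1}` the map `t ↦ F (t, y)` is differentiable at almost every `t` of the
slice `{t | (t, y) ∈ Ω}`. -/
theorem stmt_3
    {V : Type*} [NormedAddCommGroup V] [NormedSpace ℝ V] [CompleteSpace V]
    (m : ℕ) (hm : 1 ≤ m)
    (Ω : Set (ℝ × EuclideanSpace ℝ (Fin m))) (hΩopen : IsOpen Ω)
    (F g : ℝ × EuclideanSpace ℝ (Fin m) → V)
    (hF : ContinuousOn F Ω)
    (hg_meas : StronglyMeasurable g)
    (hg_int : Integrable g (volume.restrict Ω))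
    (hweak : ∀ φ : ℝ × EuclideanSpace ℝ (Fin m) → ℝ, ContDiff ℝ (⊤ : ℕ∞) φ →
      HasCompactSupport φ → tsupport φ ⊆ Ω →
      ∫ x in Ω, (fderiv ℝ φ x ((1 : ℝ), (0 : EuclideanSpace ℝ (Fin m)))) • F x
        = - ∫ x in Ω, φ x • g x) :
    ∀ᵐ y : EuclideanSpace ℝ (Fin m), ∀ᵐ t : ℝ, (t, y) ∈ Ω →
      DifferentiableWithinAt ℝ (fun s => F (s, y)) {s : ℝ | (s, y) ∈ Ω} t :=
  (stmt_3_general hΩopen hF (IntegrableOn.locallyIntegrableOn hg_int) hweak).mono fun _ hy =>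
    hy.mono fun _ ht htΩ => (ht htΩ).differentiableAt.differentiableWithinAt
end

section
/- Let (B, d_B) be a separable metric space with basepoint O_B, and let κ : B → ℓ^∞ be an isometric embedding with κ(O_B) = 0 (for instance, a Kuratowski embedding post-composed with the translation by −κ(O_B)). Let A = ℝ with the standard metric and basepoint 0, and let D be the sup-glued pseudometric on A ⊔ B given by D(a,a') = |a − a'|, D(b,b') = d_B(b,b'), and D(a,b) = max(|a|, d_B(b, O_B)) for a, a' ∈ A and b, b' ∈ B. Define ι : A ⊔ B → ℓ^∞ by ι(a) = a·e₀ for a ∈ A and ι(b) = τ(κ(b)) for b ∈ B, where e₀ = (1,0,0,…) and τ is the shift operator. Then ι is an isometric embedding with respect to D: ‖ι(p) − ι(q)‖_∞ = D(p, q) for all p, q ∈ A ⊔ B. -/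
/-!
The glued metric on `A ⊔ B` is the metric that the sup product `A × B` induces on the wedge
`A × {O_B} ∪ {O_A} × B`. Prepending a term to a sequence identifies the sup product `ℝ × ℓ^∞`
isometrically with `ℓ^∞`. Since `κ O_B = 0`, the map `ι` is the inclusion of the wedge into
`ℝ × B`, followed by `id × κ` and this identification.
-/

/-- `ℓ^∞`: the Banach space of bounded real sequences with the supremum norm. -/
abbrev LinfR : Type := lp (fun _ : ℕ => ℝ) ⊤

/-- The shift operator `τ(σ₁, σ₂, …) = (0, σ₁, σ₂, …)` on `ℓ^∞`. -/
def shiftOp (σ : LinfR) : LinfR :=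
  ⟨fun k => Nat.rec 0 (fun k' _ => σ k') k, by
    apply memℓp_infty
    obtain ⟨M, hM⟩ := (lp.memℓp σ).bddAbove
    refine ⟨max 0 M, ?_⟩
    rintro x ⟨k, rfl⟩
    cases k with
    | zero => simp
    | succ k' => exact le_trans (hM ⟨k', rfl⟩) (le_max_right 0 M)⟩

/-- The sequence `e₀ = (1, 0, 0, …)` in `ℓ^∞`. -/
def e0 : LinfR :=
  ⟨fun k => if k = 0 then 1 else 0, by
    apply memℓp_infty
    refine ⟨1, ?_⟩
    rintro x ⟨k, rfl⟩
    by_cases h : k = 0 <;> simp [h]⟩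

/-- The "supremum" gluing distance on the disjoint union of two pointed metric spaces. -/
def glueDist {A B : Type*} [MetricSpace A] [MetricSpace B] (OA : A) (OB : B) :
    A ⊕ B → A ⊕ B → ℝ
  | Sum.inl a, Sum.inl a' => dist a a'
  | Sum.inr b, Sum.inr b' => dist b b'
  | Sum.inl a, Sum.inr b => max (dist a OA) (dist b OB)
  | Sum.inr b, Sum.inl a => max (dist a OA) (dist b OB)

/-- The inclusion of the pieces of `A ⊕ B` into `A × B` as `A × {OB}` and `{OA} × B`. It takes the
same value at the two basepoints, so its image is the wedge sum of the pointed spaces. -/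
def wedgeInclusion {A B : Type*} (OA : A) (OB : B) : A ⊕ B → A × B :=
  Sum.elim (fun a => (a, OB)) (fun b => (OA, b))

lemma dist_wedgeInclusion {A B : Type*} [MetricSpace A] [MetricSpace B] (OA : A) (OB : B)
    (p q : A ⊕ B) :
    dist (wedgeInclusion OA OB p) (wedgeInclusion OA OB q) = glueDist OA OB p q := by
  rcases p with a | b <;> rcases q with a' | b' <;>
    simp [wedgeInclusion, glueDist, Prod.dist_eq, dist_comm]

@[simp]
lemma shiftOp_apply_zero (σ : LinfR) : shiftOp σ 0 = 0 := rfl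

@[simp]
lemma shiftOp_apply_succ (σ : LinfR) (k : ℕ) : shiftOp σ (k + 1) = σ k := rfl

@[simp]
lemma e0_apply_zero : e0 0 = 1 := rfl

@[simp]
lemma e0_apply_succ (k : ℕ) : e0 (k + 1) = 0 := rfl

lemma shiftOp_zero : shiftOp 0 = 0 := by
  ext k
  cases k <;> simp

lemma shiftOp_add (σ ρ : LinfR) : shiftOp (σ + ρ) = shiftOp σ + shiftOp ρ := by
  ext k
  cases k <;> simp

lemma shiftOp_smul (c : ℝ) (σ : LinfR) : shiftOp (c • σ) = c • shiftOp σ := by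
  ext k
  cases k <;> simp

lemma smul_e0_add_shiftOp_apply_zero (a : ℝ) (σ : LinfR) : (a • e0 + shiftOp σ) 0 = a := by
  change a * e0 0 + shiftOp σ 0 = a
  simp

lemma smul_e0_add_shiftOp_apply_succ (a : ℝ) (σ : LinfR) (k : ℕ) :
    (a • e0 + shiftOp σ) (k + 1) = σ k := by
  change a * e0 (k + 1) + shiftOp σ (k + 1) = σ k
  simp

lemma norm_smul_e0_add_shiftOp (a : ℝ) (σ : LinfR) : ‖a • e0 + shiftOp σ‖ = max |a| ‖σ‖ := by
  have norm_term_le (x : LinfR) (k : ℕ) : ‖x k‖ ≤ ‖x‖ :=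
    lp.norm_apply_le_norm ENNReal.top_ne_zero x k
  apply le_antisymm
  · refine lp.norm_le_of_forall_le (le_max_of_le_left (abs_nonneg a)) fun k => ?_
    cases k with
    | zero =>
      rw [smul_e0_add_shiftOp_apply_zero, Real.norm_eq_abs]
      exact le_max_left _ _
    | succ k =>
      rw [smul_e0_add_shiftOp_apply_succ]
      exact le_max_of_le_right (norm_term_le σ k)
  · refine max_le ?_ (lp.norm_le_of_forall_le (norm_nonneg _) fun k => ?_)
    · simpa only [smul_e0_add_shiftOp_apply_zero, Real.norm_eq_abs]
        using norm_term_le (a • e0 + shiftOp σ) 0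
    · simpa only [smul_e0_add_shiftOp_apply_succ]
        using norm_term_le (a • e0 + shiftOp σ) (k + 1)

/-- Prepending a term to a bounded sequence, `(a, σ) ↦ (a, σ₁, σ₂, …)`, as a linear isometry for the
sup norm on `ℝ × ℓ^∞`. -/
noncomputable def consLinearIsometry : ℝ × LinfR →ₗᵢ[ℝ] LinfR where
  toFun x := x.1 • e0 + shiftOp x.2
  map_add' x y := by
    rw [Prod.fst_add, Prod.snd_add, add_smul, shiftOp_add, add_add_add_comm]
  map_smul' c x := by
    rw [Prod.smul_fst, Prod.smul_snd, smul_assoc, shiftOp_smul, RingHom.id_apply, smul_add]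
  norm_map' x := norm_smul_e0_add_shiftOp x.1 x.2

lemma consLinearIsometry_apply (a : ℝ) (σ : LinfR) :
    consLinearIsometry (a, σ) = a • e0 + shiftOp σ := rfl

theorem stmt_7_general {A B : Type*} [MetricSpace A] [MetricSpace B] (OA : A) (OB : B)
    (f : A → ℝ) (hf : Isometry f) (hf0 : f OA = 0)
    (κ : B → LinfR) (hκ : Isometry κ) (hκ0 : κ OB = 0)
    (ι : A ⊕ B → LinfR)
    (hι : ι = Sum.elim (fun a => f a • e0) (fun b => shiftOp (κ b))) (p q : A ⊕ B) :
    ‖ι p - ι q‖ = glueDist OA OB p q := by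
  have ι_eq : ι = consLinearIsometry ∘ Prod.map f κ ∘ wedgeInclusion OA OB := by
    subst hι
    ext1 (a | b)
    · simp [wedgeInclusion, consLinearIsometry_apply, hκ0, shiftOp_zero]
    · simp [wedgeInclusion, consLinearIsometry_apply, hf0]
  have isometry_cons_prodMap : Isometry (consLinearIsometry ∘ Prod.map f κ) :=
    consLinearIsometry.isometry.comp (hf.prodMap hκ)
  calc ‖ι p - ι q‖ = dist (ι p) (ι q) := (dist_eq_norm _ _).symm
    _ = dist (wedgeInclusion OA OB p) (wedgeInclusion OA OB q) := by
      rw [ι_eq]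
      exact isometry_cons_prodMap.dist_eq _ _
    _ = glueDist OA OB p q := dist_wedgeInclusion OA OB p q

/-- Gluing the real line (basepoint `0`) to a separable metric space `B`
(basepoint `O_B`) with the sup-glued pseudometric, the map sending `a ∈ ℝ` to `a • e₀`
and `b ∈ B` to the shift of `κ b` (where `κ : B → ℓ^∞` is an isometric embedding with
`κ O_B = 0`) is an isometric embedding of the glued space into `ℓ^∞`. -/
theorem stmt_7
    {B : Type*} [MetricSpace B] [TopologicalSpace.SeparableSpace B] (OB : B)
    (κ : B → LinfR) (hκ : Isometry κ) (hκ0 : κ OB = 0)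
    (ι : ℝ ⊕ B → LinfR)
    (hι : ι = Sum.elim (fun a : ℝ => a • e0) (fun b : B => shiftOp (κ b))) :
    ∀ p q : ℝ ⊕ B, ‖ι p - ι q‖ = glueDist (0 : ℝ) OB p q :=
  stmt_7_general 0 OB id isometry_id rfl κ hκ hκ0 ι hι
end
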